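/- There is a constant C > 0, depending only on W and d, with the following property. Let Γ ≥ 2, let (j_q)_{q=0,…,L} be a Γ-chain in ℤ^d, let q₀ ∈ {0,…,L} and M ≥ 1, and set G := span_ℝ{ j_q − j_{q₀} : 0 ≤ q ≤ L }. Assume that G is already spanned by { j_q − j_{q₀} : |q − q₀| ≤ M }. Then the orthogonal projection P_G of ℝ^d onto G with respect to the scalar product ⟨·,·⟩_W satisfies |P_G j_{q₀}| ≤ C (M Γ)^{2d+1}. -/

import Mathlib

/-- Squared Euclidean norm of an integer vector. -/
noncomputable def znormSq {d : ℕ} (j : Fin d → ℤ) : ℝ :=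
  ∑ i, ((j i : ℝ)) ^ 2

/-- Real cast of an integer vector. -/
def zc {d : ℕ} (j : Fin d → ℤ) : Fin d → ℝ := fun a => (j a : ℝ)

/-- Eigenvalues of the Laplacian on the flat torus: μ_j = ‖W j‖². -/
noncomputable def mu {d : ℕ} (W : Matrix (Fin d) (Fin d) ℝ) (j : Fin d → ℤ) : ℝ :=
  ∑ i, (W.mulVec (zc j) i) ^ 2

/-- Scalar product ⟨y,y'⟩_W = ⟨Wy, Wy'⟩ induced by W. -/
noncomputable def ipW {d : ℕ} (W : Matrix (Fin d) (Fin d) ℝ) (y y' : Fin d → ℝ) : ℝ :=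
  ∑ i, W.mulVec y i * W.mulVec y' i

/-- Euclidean distance in ℝ^{d+1} between Φ(j) = (j, μ_j) and Φ(j') = (j', μ_{j'}). -/
noncomputable def phiDist {d : ℕ} (W : Matrix (Fin d) (Fin d) ℝ) (j j' : Fin d → ℤ) : ℝ :=
  Real.sqrt (znormSq (j' - j) + (mu W j' - mu W j) ^ 2)

/-- A Γ-chain of length `L`. -/
def IsGammaChain {d : ℕ} (W : Matrix (Fin d) (Fin d) ℝ) (Γ : ℝ) (L : ℕ)
    (j : Fin (L + 1) → Fin d → ℤ) : Prop :=
  Function.Injective j ∧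
    ∀ q : Fin L, phiDist W (j q.castSucc) (j q.succ) ≤ Γ

/-!
By polarisation, `2⟨a, j - a⟩_W = μ_j - μ_a - μ_{j - a}`, so a point `j` with `Φ(j)` within `N ≥ 1`
of `Φ(a)` satisfies `⟨a, j - a⟩_W = O(N²)`. A vector `v` in the span of such integer differences is
a combination of linearly independent ones; complete them by unit vectors to a basis of `ℝ^d`. The
determinant of this basis is a nonzero integer, so Cramer's rule bounds the coefficients of `v` by
`O(N^{d-1} |v|)`. When `v` is the projection of `a`, this gives
`|v|² = O(⟨v, v⟩_W) = O(⟨a, v⟩_W) = O(N^{d+1} |v|)`. Along a `Γ`-chain, `N = M Γ` is allowed by the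
triangle inequality for `Φ`.
-/

section Determinants

variable {n : Type*} [Fintype n] [DecidableEq n]

theorem abv_det_le_prod {R S : Type*} [CommRing R] [Nontrivial R] [CommRing S] [LinearOrder S]
    [IsStrictOrderedRing S] (abv : AbsoluteValue R S) {A : Matrix n n R} {c : n → S}
    (hA : ∀ i k, abv (A i k) ≤ c k) :
    abv A.det ≤ (Fintype.card n).factorial • ∏ k, c k :=
  calc
    abv A.det = abv (∑ σ : Equiv.Perm n, Equiv.Perm.sign σ • ∏ k, A (σ k) k) :=
      congrArg abv (Matrix.det_apply A)
    _ ≤ ∑ σ : Equiv.Perm n, abv (Equiv.Perm.sign σ • ∏ k, A (σ k) k) := abv.sum_le _ _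
    _ = ∑ σ : Equiv.Perm n, ∏ k, abv (A (σ k) k) :=
      Finset.sum_congr rfl fun σ _ => by rw [abv.map_units_int_smul, abv.map_prod]
    _ ≤ ∑ _σ : Equiv.Perm n, ∏ k, c k := by gcongr; exact hA _ _
    _ = (Fintype.card n).factorial • ∏ k, c k := by simp [Fintype.card_perm]

theorem abs_cramer_apply_le {A : Matrix n n ℝ} {N : ℝ} (hA : ∀ i k, |A i k| ≤ N)
    (v : n → ℝ) (k : n) :
    |A.cramer v k| ≤ (Fintype.card n).factorial * N ^ (Fintype.card n - 1) * ‖v‖ := by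
  have hcol : ∀ i l, |A.updateCol k v i l| ≤ Function.update (fun _ => N) k ‖v‖ l := by
    intro i l
    obtain rfl | hl := eq_or_ne l k
    · simpa using norm_le_pi_norm v i
    · simpa [hl] using hA i l
  have hprod : ∏ l, Function.update (fun _ => N) k ‖v‖ l = N ^ (Fintype.card n - 1) * ‖v‖ := by
    rw [Finset.prod_update_of_mem (Finset.mem_univ k), Finset.prod_const, mul_comm,
      Finset.card_sdiff_of_subset (Finset.subset_univ _), Finset.card_singleton, Finset.card_univ]
  rw [Matrix.cramer_apply, mul_assoc, ← hprod, ← nsmul_eq_mul]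
  exact abv_det_le_prod AbsoluteValue.abs hcol

theorem abs_apply_le_of_intCast_mulVec {A : Matrix n n ℤ} (hdet : A.det ≠ 0) {N : ℝ}
    (hA : ∀ i k, |(A i k : ℝ)| ≤ N) (x : n → ℝ) (k : n) :
    |x k| ≤ (Fintype.card n).factorial * N ^ (Fintype.card n - 1) *
      ‖(A.map (Int.cast : ℤ → ℝ)).mulVec x‖ := by
  set B : Matrix n n ℝ := A.map (Int.cast : ℤ → ℝ)
  have hB : 1 ≤ |B.det| := by
    rw [show B.det = (A.det : ℝ) from (Int.cast_det A).symm]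
    exact_mod_cast Int.one_le_abs hdet
  have hcramer : B.cramer (B.mulVec x) = B.det • x := by
    rw [Matrix.cramer_eq_adjugate_mulVec, Matrix.mulVec_mulVec, Matrix.adjugate_mul,
      Matrix.smul_mulVec, Matrix.one_mulVec]
  calc |x k| ≤ |B.det| * |x k| := le_mul_of_one_le_left (abs_nonneg _) hB
    _ = |B.cramer (B.mulVec x) k| := by rw [hcramer, Pi.smul_apply, smul_eq_mul, abs_mul]
    _ ≤ _ := abs_cramer_apply_le hA _ k

end Determinants

section LatticePoints

theorem exists_basis_subset_span_le {ι K V : Type*} [DivisionRing K] [AddCommGroup V]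
    [Module K V] (e : Module.Basis ι K V) {S T : Set V} (hST : S ⊆ T)
    (hT : ⊤ ≤ Submodule.span K T) :
    ∃ b : Module.Basis ι K V, (∀ i, b i ∈ T) ∧
      Submodule.span K S ≤ Submodule.span K (b '' (b ⁻¹' S)) := by
  obtain ⟨s, hsS, hspan, hs⟩ := exists_linearIndependent K S
  replace hs : LinearIndepOn K id s := hs
  have hsT : s ⊆ T := hsS.trans hST
  let β := Module.Basis.extendLe hs hsT hT
  have hβ : Set.range β = hs.extend hsT := Module.Basis.range_extendLe hs hsT hT
  let b := β.reindex (β.indexEquiv e)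
  have hb : Set.range b = hs.extend hsT := (β.range_reindex _).trans hβ
  refine ⟨b, fun i => hs.extend_subset hsT (hb ▸ Set.mem_range_self i), ?_⟩
  rw [← hspan, Set.image_preimage_eq_inter_range, hb]
  exact Submodule.span_mono fun y hy => ⟨hsS hy, hs.subset_extend hsT hy⟩

/-- The points of the lattice `ℤ^ι` in the closed ball of radius `N` of `ℝ^ι`, for the sup norm
carried by `ι → ℝ`. -/
def latticeBall (ι : Type*) [Fintype ι] (N : ℝ) : Set (ι → ℝ) :=
  {y | ‖y‖ ≤ N ∧ ∃ z : ι → ℤ, ∀ i, y i = z i}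

variable {ι : Type*} [Fintype ι]

theorem span_latticeBall_eq_top {N : ℝ} (hN : 1 ≤ N) :
    Submodule.span ℝ (latticeBall ι N) = ⊤ := by
  classical
  rw [eq_top_iff, ← (Pi.basisFun ℝ ι).span_eq]
  refine Submodule.span_mono ?_
  rintro _ ⟨k, rfl⟩
  refine ⟨by simpa [Pi.norm_single] using hN, Pi.single k 1, fun i => ?_⟩
  simp [Pi.single_apply]

theorem abs_repr_le_of_mem_latticeBall {N : ℝ} (b : Module.Basis ι ℝ (ι → ℝ))
    (hb : ∀ i, b i ∈ latticeBall ι N) (v : ι → ℝ) (i : ι) :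
    |b.repr v i| ≤ (Fintype.card ι).factorial * N ^ (Fintype.card ι - 1) * ‖v‖ := by
  classical
  choose hnorm z hz using hb
  let A : Matrix ι ι ℤ := Matrix.of fun i k => z k i
  have hA : A.map (Int.cast : ℤ → ℝ) = (Pi.basisFun ℝ ι).toMatrix b := by
    ext i k
    simp [A, Module.Basis.toMatrix_apply, hz]
  have hdet : A.det ≠ 0 := by
    have hunit := (Pi.basisFun ℝ ι).isUnit_det b
    rw [Module.Basis.det_apply, ← hA] at hunit
    exact_mod_cast (Int.cast_det (R := ℝ) A).trans_ne hunit.ne_zero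
  have hentry : ∀ i k, |(A i k : ℝ)| ≤ N := fun i k => by
    simpa [A, hz] using (norm_le_pi_norm (b k) i).trans (hnorm k)
  have hv : (A.map (Int.cast : ℤ → ℝ)).mulVec (b.repr v) = v := by
    rw [hA, Module.Basis.toMatrix_mulVec_repr]
    rfl
  simpa only [hv] using abs_apply_le_of_intCast_mulVec hdet hentry (b.repr v) i

theorem abs_apply_le_of_mem_span_of_subset_latticeBall {N B : ℝ} (hN : 1 ≤ N) (hB : 0 ≤ B)
    {S : Set (ι → ℝ)} (hS : S ⊆ latticeBall ι N) (f : (ι → ℝ) →ₗ[ℝ] ℝ)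
    (hf : ∀ y ∈ S, |f y| ≤ B) {v : ι → ℝ} (hv : v ∈ Submodule.span ℝ S) :
    |f v| ≤ Fintype.card ι *
      ((Fintype.card ι).factorial * N ^ (Fintype.card ι - 1) * ‖v‖ * B) := by
  obtain ⟨b, hb, hspan⟩ :=
    exists_basis_subset_span_le (Pi.basisFun ℝ ι) hS (span_latticeBall_eq_top hN).ge
  have hsupp : ∀ i, b.repr v i ≠ 0 → b i ∈ S := fun i hi =>
    b.mem_span_image.1 (hspan hv) (Finsupp.mem_support_iff.2 hi)
  have hterm : ∀ i, |b.repr v i * f (b i)| ≤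
      (Fintype.card ι).factorial * N ^ (Fintype.card ι - 1) * ‖v‖ * B := by
    intro i
    by_cases hi : b.repr v i = 0
    · rw [hi, zero_mul, abs_zero]
      positivity
    · rw [abs_mul]
      gcongr
      · exact abs_repr_le_of_mem_latticeBall b hb v i
      · exact hf _ (hsupp i hi)
  calc |f v| = |∑ i, b.repr v i * f (b i)| := by
        conv_lhs => rw [← b.sum_repr v]
        simp only [map_sum, map_smul, smul_eq_mul]
    _ ≤ ∑ i, |b.repr v i * f (b i)| := Finset.abs_sum_le_sum_abs _ _
    _ ≤ _ := (Finset.sum_le_card_nsmul _ _ _ fun i _ => hterm i).trans_eq (by simp)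

end LatticePoints

theorem dist_le_abs_sub_mul_of_dist_succ_le {α : Type*} [PseudoMetricSpace α] {L : ℕ} {Γ : ℝ}
    {u : Fin (L + 1) → α} (hu : ∀ q : Fin L, dist (u q.castSucc) (u q.succ) ≤ Γ)
    (p q : Fin (L + 1)) : dist (u p) (u q) ≤ |((p : ℕ) : ℝ) - ((q : ℕ) : ℝ)| * Γ := by
  wlog hpq : p ≤ q generalizing p q
  · rw [dist_comm, abs_sub_comm]
    exact this q p (le_of_not_ge hpq)
  have hstep : ∀ {k : ℕ}, (p : ℕ) ≤ k → k < q →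
      dist (u (Fin.ofNat (L + 1) k)) (u (Fin.ofNat (L + 1) (k + 1))) ≤ Γ := by
    intro k _ hk
    have hkL : k < L := by omega
    convert hu ⟨k, hkL⟩ using 3 <;> ext <;> simp <;> omega
  have hsum := dist_le_Ico_sum_of_dist_le (f := fun k => u (Fin.ofNat (L + 1) k)) hpq hstep
  have hle : ((p : ℕ) : ℝ) ≤ (q : ℕ) := by exact_mod_cast hpq
  rw [abs_sub_comm, abs_of_nonneg (sub_nonneg.2 hle)]
  simpa [Nat.cast_sub (Fin.le_def.1 hpq)] using hsum

section TorusGeometry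

variable {d : ℕ} (W : Matrix (Fin d) (Fin d) ℝ)

/-- The map `y ↦ W y` with values in Euclidean space: it turns `⟨·,·⟩_W` into the Euclidean inner
product and `μ_j` into a squared norm. Its source carries the sup norm. -/
noncomputable def weightMap : (Fin d → ℝ) →L[ℝ] EuclideanSpace ℝ (Fin d) :=
  (EuclideanSpace.equiv (Fin d) ℝ).symm.toContinuousLinearMap ∘L W.mulVecLin.toContinuousLinearMap

theorem weightMap_apply (y : Fin d → ℝ) : weightMap W y = WithLp.toLp 2 (W.mulVec y) := rfl

theorem ipW_eq_inner (y y' : Fin d → ℝ) :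
    ipW W y y' = inner ℝ (weightMap W y) (weightMap W y') := by
  simp [ipW, weightMap_apply, PiLp.inner_apply, mul_comm]

theorem mu_eq_norm_sq (j : Fin d → ℤ) : mu W j = ‖weightMap W (zc j)‖ ^ 2 := by
  simp [mu, weightMap_apply, EuclideanSpace.norm_sq_eq]

theorem norm_toLp_le_mul_norm_weightMap (hW : IsUnit W.det) (v : Fin d → ℝ) :
    ‖WithLp.toLp 2 v‖ ≤ ‖Matrix.toEuclideanCLM (𝕜 := ℝ) W⁻¹‖ * ‖weightMap W v‖ := by
  have hinv : Matrix.toEuclideanCLM (𝕜 := ℝ) W⁻¹ (weightMap W v) = WithLp.toLp 2 v := by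
    rw [weightMap_apply, Matrix.toEuclideanCLM_toLp, Matrix.mulVec_mulVec,
      Matrix.nonsing_inv_mul W hW, Matrix.one_mulVec]
  exact hinv ▸ ContinuousLinearMap.le_opNorm _ _

theorem zc_sub (j j' : Fin d → ℤ) : zc (j - j') = zc j - zc j' := by
  ext i
  simp [zc]

/-- The embedding `Φ(j) = (j, μ_j)` of `ℤ^d` into the Euclidean space `ℝ^{d+1}`. -/
noncomputable def phi (j : Fin d → ℤ) : EuclideanSpace ℝ (Fin (d + 1)) :=
  WithLp.toLp 2 (Fin.snoc (zc j) (mu W j))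

theorem dist_phi (j j' : Fin d → ℤ) : dist (phi W j) (phi W j') = phiDist W j j' := by
  rw [dist_comm, EuclideanSpace.dist_eq, phiDist, znormSq]
  simp [phi, zc, Fin.sum_univ_castSucc, Real.dist_eq, sq_abs]

variable {W} in
theorem zc_sub_mem_latticeBall {N : ℝ} {a j : Fin d → ℤ} (h : dist (phi W a) (phi W j) ≤ N) :
    zc (j - a) ∈ latticeBall (Fin d) N := by
  refine ⟨(pi_norm_le_iff_of_nonneg (dist_nonneg.trans h)).2 fun i => ?_, j - a, fun i => rfl⟩
  rw [dist_comm, dist_eq_norm] at h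
  simpa [phi, zc] using (PiLp.norm_apply_le (phi W j - phi W a) i.castSucc).trans h

variable {W} in
theorem abs_mu_sub_le {N : ℝ} {a j : Fin d → ℤ} (h : dist (phi W a) (phi W j) ≤ N) :
    |mu W j - mu W a| ≤ N := by
  rw [dist_comm, dist_eq_norm] at h
  simpa [phi] using (PiLp.norm_apply_le (phi W j - phi W a) (Fin.last d)).trans h

theorem mu_sub_mu_eq (a j : Fin d → ℤ) :
    mu W j - mu W a = 2 * ipW W (zc a) (zc (j - a)) + ‖weightMap W (zc (j - a))‖ ^ 2 := by
  have hj : weightMap W (zc j) = weightMap W (zc a) + weightMap W (zc (j - a)) := by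
    rw [← map_add, zc_sub, add_sub_cancel]
  rw [mu_eq_norm_sq, mu_eq_norm_sq, ipW_eq_inner, hj, norm_add_sq_real]
  ring

variable {W} in
theorem abs_ipW_zc_le {N : ℝ} (hN : 1 ≤ N) {a j : Fin d → ℤ}
    (h : dist (phi W a) (phi W j) ≤ N) :
    |ipW W (zc a) (zc (j - a))| ≤ (1 + ‖weightMap W‖ ^ 2) * N ^ 2 := by
  have hsq : ‖weightMap W (zc (j - a))‖ ^ 2 ≤ ‖weightMap W‖ ^ 2 * N ^ 2 := by
    rw [← mul_pow]
    gcongr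
    exact (weightMap W).le_opNorm_of_le (zc_sub_mem_latticeBall h).1
  have hNsq : N ≤ N ^ 2 := le_self_pow₀ hN two_ne_zero
  have hmu := abs_le.1 (abs_mu_sub_le h)
  have hpol := mu_sub_mu_eq W a j
  have hnonneg := sq_nonneg ‖weightMap W (zc (j - a))‖
  rw [abs_le]
  constructor <;> linarith

variable {W} in
theorem abs_ipW_zc_le_of_mem_span {N : ℝ} (hN : 1 ≤ N) {a : Fin d → ℤ} {S : Set (Fin d → ℤ)}
    (hS : ∀ j ∈ S, dist (phi W a) (phi W j) ≤ N) {v : Fin d → ℝ}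
    (hv : v ∈ Submodule.span ℝ ((fun j => zc (j - a)) '' S)) :
    |ipW W (zc a) v| ≤ d * d.factorial * (1 + ‖weightMap W‖ ^ 2) * N ^ (d + 1) * ‖v‖ := by
  set τ := 1 + ‖weightMap W‖ ^ 2
  have hball : (fun j => zc (j - a)) '' S ⊆ latticeBall (Fin d) N :=
    Set.image_subset_iff.2 fun j hj => zc_sub_mem_latticeBall (hS j hj)
  let f : (Fin d → ℝ) →ₗ[ℝ] ℝ := innerₛₗ ℝ (weightMap W (zc a)) ∘ₗ (weightMap W).toLinearMap
  have hf : ∀ y, f y = ipW W (zc a) y := fun y => (ipW_eq_inner W (zc a) y).symm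
  have hfS : ∀ y ∈ (fun j => zc (j - a)) '' S, |f y| ≤ τ * N ^ 2 :=
    Set.forall_mem_image.2 fun j hj => (hf _).symm ▸ abs_ipW_zc_le hN (hS j hj)
  have hfv := abs_apply_le_of_mem_span_of_subset_latticeBall hN (by positivity) hball f hfS hv
  rw [hf, Fintype.card_fin] at hfv
  -- The factor `d` absorbs the truncation of `d - 1` at `d = 0`.
  have hpow : (d : ℝ) * (N ^ (d - 1) * N ^ 2) = d * N ^ (d + 1) := by
    rcases d with _ | n
    · simp
    · rw [← pow_add, Nat.add_sub_cancel]
  calc |ipW W (zc a) v| ≤ d * (d.factorial * N ^ (d - 1) * ‖v‖ * (τ * N ^ 2)) := hfv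
    _ = d.factorial * τ * (d * (N ^ (d - 1) * N ^ 2)) * ‖v‖ := by ring
    _ = d * d.factorial * τ * N ^ (d + 1) * ‖v‖ := by rw [hpow]; ring

theorem exists_norm_le_of_ipW_sub_self_eq_zero (hW : IsUnit W.det) :
    ∃ C : ℝ, 0 < C ∧ ∀ N : ℝ, 1 ≤ N → ∀ (a : Fin d → ℤ) (S : Set (Fin d → ℤ)),
      (∀ j ∈ S, dist (phi W a) (phi W j) ≤ N) →
        ∀ v ∈ Submodule.span ℝ ((fun j => zc (j - a)) '' S), ipW W (zc a - v) v = 0 →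
          ‖WithLp.toLp 2 v‖ ≤ C * N ^ (d + 1) := by
  set c := ‖Matrix.toEuclideanCLM (𝕜 := ℝ) W⁻¹‖
  set K := d * d.factorial * (1 + ‖weightMap W‖ ^ 2)
  refine ⟨c ^ 2 * K + 1, by positivity, fun N hN a S hS v hv horth => ?_⟩
  set r := ‖WithLp.toLp 2 v‖
  have hvr : ‖v‖ ≤ r :=
    (pi_norm_le_iff_of_nonneg (norm_nonneg _)).2 (PiLp.norm_apply_le (WithLp.toLp 2 v))
  have hself : ‖weightMap W v‖ ^ 2 = ipW W (zc a) v := by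
    rw [ipW_eq_inner, map_sub, inner_sub_left, ← ipW_eq_inner, real_inner_self_eq_norm_sq] at horth
    linarith
  have hsq : r * r ≤ c ^ 2 * K * N ^ (d + 1) * r := by
    calc r * r ≤ (c * ‖weightMap W v‖) * (c * ‖weightMap W v‖) := by
          gcongr <;> exact norm_toLp_le_mul_norm_weightMap W hW v
      _ = c ^ 2 * ipW W (zc a) v := by rw [← hself]; ring
      _ ≤ c ^ 2 * (K * N ^ (d + 1) * r) := by
          gcongr
          exact (le_abs_self _).trans ((abs_ipW_zc_le_of_mem_span hN hS hv).trans (by gcongr))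
      _ = c ^ 2 * K * N ^ (d + 1) * r := by ring
  have hr : r ≤ c ^ 2 * K * N ^ (d + 1) := by
    rcases (norm_nonneg (WithLp.toLp 2 v)).eq_or_lt with h | h
    · exact h.symm.le.trans (by positivity)
    · exact le_of_mul_le_mul_right hsq h
  exact hr.trans (by gcongr; linarith)

end TorusGeometry

/-- The differences `j_q − j_{q₀}` with `|q − q₀| ≤ M`; their span is the space onto which `j_{q₀}`
is projected. -/
def nearDifferences {d L : ℕ} (j : Fin (L + 1) → Fin d → ℤ) (q₀ : Fin (L + 1)) (M : ℝ) :
    Set (Fin d → ℝ) :=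
  {y | ∃ q : Fin (L + 1), (|((q : ℕ) : ℤ) - ((q₀ : ℕ) : ℤ)| : ℝ) ≤ M ∧ y = zc (j q - j q₀)}

theorem projection_bound_on_chain_general {d : ℕ} (W : Matrix (Fin d) (Fin d) ℝ)
    (hW : IsUnit W.det) :
    ∃ C : ℝ, 0 < C ∧ ∀ Γ : ℝ, 1 ≤ Γ → ∀ (L : ℕ) (j : Fin (L + 1) → Fin d → ℤ),
      (∀ q : Fin L, phiDist W (j q.castSucc) (j q.succ) ≤ Γ) →
        ∀ (q₀ : Fin (L + 1)) (M : ℝ), 1 ≤ M →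
          ∀ v ∈ Submodule.span ℝ (nearDifferences j q₀ M),
            (∀ w ∈ Submodule.span ℝ (nearDifferences j q₀ M), ipW W (zc (j q₀) - v) w = 0) →
              Real.sqrt (∑ i, (v i) ^ 2) ≤ C * (M * Γ) ^ (d + 1) := by
  obtain ⟨C, hC, hbound⟩ := exists_norm_le_of_ipW_sub_self_eq_zero W hW
  refine ⟨C, hC, fun Γ hΓ L j hj q₀ M hM v hv horth => ?_⟩
  have hnear : ∀ q : Fin (L + 1), (|((q : ℕ) : ℤ) - ((q₀ : ℕ) : ℤ)| : ℝ) ≤ M →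
      dist (phi W (j q₀)) (phi W (j q)) ≤ M * Γ := fun q hq => by
    have hchain := dist_le_abs_sub_mul_of_dist_succ_le (u := fun q => phi W (j q))
      (fun q => (dist_phi W _ _).trans_le (hj q)) q q₀
    rw [dist_comm]
    exact hchain.trans (mul_le_mul_of_nonneg_right (by exact_mod_cast hq) (by linarith))
  have himage : nearDifferences j q₀ M ⊆ (fun j' => zc (j' - j q₀)) ''
      {j' | dist (phi W (j q₀)) (phi W j') ≤ M * Γ} := by
    rintro _ ⟨q, hq, rfl⟩
    exact ⟨j q, hnear q hq, rfl⟩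
  simpa [EuclideanSpace.norm_eq] using hbound (M * Γ) (one_le_mul_of_one_le_of_one_le hM hΓ)
    (j q₀) _ (fun _ => id) v (Submodule.span_mono himage hv) (horth v hv)

theorem projection_bound_on_chain
    (d : ℕ) (hd : 1 ≤ d) (W : Matrix (Fin d) (Fin d) ℝ) (hW : IsUnit W.det) :
    ∃ C : ℝ, 0 < C ∧
      ∀ (Γ : ℝ), 2 ≤ Γ →
        ∀ (L : ℕ) (j : Fin (L + 1) → Fin d → ℤ), IsGammaChain W Γ L j →
          ∀ (q₀ : Fin (L + 1)) (M : ℝ), 1 ≤ M →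
            -- G is already spanned by the vectors j_q − j_{q₀} with |q − q₀| ≤ M
            Submodule.span ℝ {y : Fin d → ℝ | ∃ q : Fin (L + 1), y = zc (j q - j q₀)} ≤
              Submodule.span ℝ {y : Fin d → ℝ | ∃ q : Fin (L + 1),
                (|((q : ℕ) : ℤ) - ((q₀ : ℕ) : ℤ)| : ℝ) ≤ M ∧ y = zc (j q - j q₀)} →
            -- v = P_G j_{q₀}: the ⟨·,·⟩_W-orthogonal projection of j_{q₀} onto G
            ∀ v : Fin d → ℝ,
              v ∈ Submodule.span ℝ {y : Fin d → ℝ | ∃ q : Fin (L + 1), y = zc (j q - j q₀)} →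
              (∀ w ∈ Submodule.span ℝ
                  {y : Fin d → ℝ | ∃ q : Fin (L + 1), y = zc (j q - j q₀)},
                ipW W (zc (j q₀) - v) w = 0) →
              Real.sqrt (∑ i, (v i) ^ 2) ≤ C * (M * Γ) ^ (2 * d + 1) := by
  obtain ⟨C, hC, hbound⟩ := projection_bound_on_chain_general W hW
  refine ⟨C, hC, fun Γ hΓ L j hj q₀ M hM hG v hv horth => ?_⟩
  have hlocal : nearDifferences j q₀ M ⊆ {y | ∃ q : Fin (L + 1), y = zc (j q - j q₀)} := by
    rintro _ ⟨q, _, rfl⟩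
    exact ⟨q, rfl⟩
  have hMΓ : 1 ≤ M * Γ := by nlinarith
  refine (hbound Γ (by linarith) L j hj.2 q₀ M hM v (hG hv) fun w hw =>
    horth w (Submodule.span_mono hlocal hw)).trans ?_
  gcongr
  omega
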